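/- Let p_n = 2 for all n ≥ 1, 𝒟_1 = {0,1,2}, 𝒟_2 = {0,5,6}, and 𝒟_n = {0,3} for all n ≥ 3. Then the Moran measure μ_{(p_n),(𝒟_n)} = δ_{2^{-1}{0,1,2}} * δ_{4^{-1}{0,5,6}} * δ_{8^{-1}{0,3}} * δ_{16^{-1}{0,3}} * ⋯ is not a spectral measure. -/

import Mathlib

open MeasureTheory Filter Finset Real
open scoped ENNReal NNReal

noncomputable section

/-- `P n = p 1 * p 2 * ⋯ * p n`. -/
def Pprod (p : ℕ → ℕ) (n : ℕ) : ℕ := ∏ i ∈ Finset.Icc 1 n, p i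

/-- The uniform probability measure on the finite set `s • E ⊆ ℝ`. -/
def unifD (E : Finset ℕ) (s : ℝ) : Measure ℝ :=
  (E.card : ℝ≥0∞)⁻¹ • ∑ d ∈ E, Measure.dirac (s * (d : ℝ))

/-- The finite convolutions `μ_n = δ_{P₁⁻¹D₁} ∗ ⋯ ∗ δ_{Pₙ⁻¹Dₙ}`. -/
def muN (p : ℕ → ℕ) (D : ℕ → Finset ℕ) : ℕ → Measure ℝ
  | 0 => Measure.dirac 0
  | n + 1 => Measure.conv (muN p D n) (unifD (D (n + 1)) ((Pprod p (n + 1) : ℝ)⁻¹))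

/-- `μ` is the weak limit of the sequence of measures `ν n`. -/
def IsWeakLimit (ν : ℕ → Measure ℝ) (μ : Measure ℝ) : Prop :=
  ∀ f : BoundedContinuousFunction ℝ ℝ,
    Tendsto (fun n => ∫ x, f x ∂ν n) atTop (nhds (∫ x, f x ∂μ))

/-- `μ` is the Moran measure attached to `(p, D)`: the infinite convolution
`δ_{P₁⁻¹D₁} ∗ δ_{P₂⁻¹D₂} ∗ ⋯`, in the sense of weak convergence. -/
def IsMoran (p : ℕ → ℕ) (D : ℕ → Finset ℕ) (μ : Measure ℝ) : Prop :=
  IsProbabilityMeasure μ ∧ IsWeakLimit (muN p D) μ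

/-- The exponentials `e_λ, λ ∈ Λ` are pairwise orthogonal in `L²(μ)`. -/
def IsOrthSet (μ : Measure ℝ) (Λ : Set ℝ) : Prop :=
  ∀ l ∈ Λ, ∀ l' ∈ Λ, l ≠ l' →
    ∫ x : ℝ, Complex.exp (2 * Real.pi * Complex.I * (l - l') * x) ∂μ = 0

/-- `Λ` is a spectrum of `μ`: the exponentials `e_λ, λ ∈ Λ` form an orthonormal
basis of `L²(μ)` (orthonormal + maximal, i.e. complete). -/
def IsSpectrum (μ : Measure ℝ) (Λ : Set ℝ) : Prop :=
  IsOrthSet μ Λ ∧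
  ∀ f : ℝ → ℂ, MemLp f 2 μ →
    (∀ l ∈ Λ, ∫ x : ℝ, f x * Complex.exp (-(2 * Real.pi * Complex.I * l * x)) ∂μ = 0) →
    f =ᵐ[μ] 0

def IsSpectralMeasure (μ : Measure ℝ) : Prop := ∃ Λ : Set ℝ, Λ.Countable ∧ IsSpectrum μ Λ

/-- Condition (T1): `D n = {0,1,…,N-1}` with `3 < N`, `N ∣ p n`, `N < p n`. -/
def T1cond (p : ℕ → ℕ) (D : ℕ → Finset ℕ) (n : ℕ) : Prop :=
  ∃ N : ℕ, 3 < N ∧ N ∣ p n ∧ N < p n ∧ D n = Finset.range N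

/-- Condition (T2) (except for the global sup condition): `D n = {0,a,b}`,
`0 < a < b`, `gcd(a,b) = 1`, `{a,b} ≡ {1,2} (mod 3)`, `3 ∣ p n`. -/
def T2cond (p : ℕ → ℕ) (D : ℕ → Finset ℕ) (n : ℕ) : Prop :=
  ∃ a b : ℕ, 0 < a ∧ a < b ∧ Nat.gcd a b = 1 ∧
    (a % 3 = 1 ∧ b % 3 = 2 ∨ a % 3 = 2 ∧ b % 3 = 1) ∧ 3 ∣ p n ∧
    D n = ({0, a, b} : Finset ℕ)

/-- Condition (T3): `D n = {0,d}` with `0 < d < p n` and `p n / gcd (d, p n)` even.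
(The decomposition `d = 2^l d'` with `d'` odd always exists, with `l` the 2-adic
valuation of `d`.) -/
def T3cond (p : ℕ → ℕ) (D : ℕ → Finset ℕ) (n : ℕ) : Prop :=
  ∃ d : ℕ, 0 < d ∧ d < p n ∧ 2 ∣ p n / Nat.gcd d (p n) ∧ D n = ({0, d} : Finset ℕ)

/-- The pair `(p, D)` satisfies conditions (T1)–(T3), including the requirement
`sup {b n / p n : n of type (T2)} < 2/3`. -/
def SatisfiesT (p : ℕ → ℕ) (D : ℕ → Finset ℕ) : Prop :=
  (∀ n, 1 ≤ n → T1cond p D n ∨ T2cond p D n ∨ T3cond p D n) ∧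
  ∃ c : ℝ, c < 2 / 3 ∧ ∀ n, 1 ≤ n → T2cond p D n → (((D n).sup id : ℕ) : ℝ) / (p n : ℝ) ≤ c

/-- `σ ∈ {-1,1}^ℕ`. -/
def IsSigma (σ : ℕ → ℤ) : Prop := ∀ n, σ n = 1 ∨ σ n = -1

/-- `α` is admissible: `α m ∈ {-⌊N/2⌋, …, N - 1 - ⌊N/2⌋}` where `N = #(D m)`,
for every `m` with `#(D m) = N_m > 3`. -/
def Admissible (D : ℕ → Finset ℕ) (α : ℕ → ℤ) : Prop :=
  ∀ m, 1 ≤ m → 3 < (D m).card →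
    -(((D m).card / 2 : ℕ) : ℤ) ≤ α m ∧
      α m ≤ ((D m).card : ℤ) - 1 - (((D m).card / 2 : ℕ) : ℤ)

/-- The largest element `d n` (resp. `b n`) of `D n`. -/
def bOf (D : ℕ → Finset ℕ) (n : ℕ) : ℕ := (D n).sup id

/-- The middle element `a n` of a digit set `{0, a, b}`. -/
def aOf (D : ℕ → Finset ℕ) (n : ℕ) : ℕ := (((D n).erase 0).erase ((D n).sup id)).sup id

/-- `l n`: the 2-adic valuation of `d n`, i.e. `d n = 2^(l n) * d'` with `d'` odd. -/
def lOf (D : ℕ → Finset ℕ) (n : ℕ) : ℕ := padicValNat 2 ((D n).sup id)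

/-- The finite set `Λ_n^{σ,α}`. -/
def LamN (p : ℕ → ℕ) (D : ℕ → Finset ℕ) (σ α : ℕ → ℤ) (n : ℕ) : Set ℝ :=
  { x | ∃ c : ℕ → ℝ,
      (∀ i, (D i).card = 2 → c i = 0 ∨ c i = (σ i : ℝ) / 2 ^ (1 + lOf D i)) ∧
      (∀ i, (D i).card = 3 → c i = 0 ∨ c i = 1 / 3 ∨ c i = -(1 / 3)) ∧
      (∀ i, 3 < (D i).card → c i = (α i : ℝ) / ((D i).card : ℝ)) ∧
      x = ∑ i ∈ Finset.Icc 1 n, (Pprod p i : ℝ) * c i }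

/-- `Λ^{σ,α} = ⋃_{n ≥ 1} Λ_n^{σ,α}`. -/
def Lam (p : ℕ → ℕ) (D : ℕ → Finset ℕ) (σ α : ℕ → ℤ) : Set ℝ :=
  ⋃ n ∈ Set.Ici 1, LamN p D σ α n

/-- The Fourier transform `μ̂(ξ) = ∫ e^{-2πixξ} dμ(x)`. -/
def FT (μ : Measure ℝ) (ξ : ℝ) : ℂ :=
  ∫ x : ℝ, Complex.exp (-(2 * Real.pi * Complex.I * x * ξ)) ∂μ

/-- The mask polynomial `m_E(t) = (1/#E) ∑_{d ∈ E} e^{2πidt}`. -/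
def mask (E : Finset ℕ) (t : ℝ) : ℂ :=
  (E.card : ℂ)⁻¹ * ∑ d ∈ E, Complex.exp (2 * Real.pi * Complex.I * (d : ℝ) * t)

end

noncomputable section

open scoped Topology

/-! The tail `δ_{8⁻¹{0,3}} * δ_{16⁻¹{0,3}} * ⋯` is the uniform law `U` on `[0, 3/4]`, so that
`μ = δ_{2⁻¹{0,1,2}} * δ_{4⁻¹{0,5,6}} * U`. With `u = e^{it/4}` the characteristic function of `μ`
at `t` can only vanish if `1 + u² + u⁴ = 0`, `1 + u⁵ + u⁶ = 0` or `u³ = 1`. On the unit circle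
`1 + z + w = 0` forces `zw = 1` and `z³ = 1`; this gives `u⁶ = 1` in the first case and
`u¹¹ = u¹⁵ = 1`, hence `u = 1`, in the second. So `u⁶ = 1` at every zero, the frequencies of
orthogonal exponentials differ by multiples of `2/3`, and up to a common factor these exponentials
are all `3/2`-periodic. On the other hand `0` and `3/2 = 6/4` are both atoms of
`δ_{2⁻¹{0,1,2}} * δ_{4⁻¹{0,5,6}}`, so `μ` dominates `U/9` as well as its translate by `3/2`. The
exponentials cannot tell these two measures apart, so they are not complete in `L²(μ)`. -/

section Density

variable {α : Type*} {mα : MeasurableSpace α} {μ ν : Measure α}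

lemma withDensity_rnDeriv_eq_of_le [IsFiniteMeasure μ] (hν : ν ≤ μ) :
    μ.withDensity (ν.rnDeriv μ) = ν :=
  have := isFiniteMeasure_of_le μ hν
  Measure.withDensity_rnDeriv_eq _ _ (Measure.absolutelyContinuous_of_le hν)

lemma memLp_toReal_rnDeriv_of_le [IsFiniteMeasure μ] (hν : ν ≤ μ) (q : ℝ≥0∞) :
    MemLp (fun x => ((ν.rnDeriv μ x).toReal : ℂ)) q μ := by
  have hmeas : Measurable fun x => ((ν.rnDeriv μ x).toReal : ℂ) :=
    (Measure.measurable_rnDeriv ν μ).ennreal_toReal.complex_ofReal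
  refine MemLp.of_bound hmeas.aestronglyMeasurable 1 ?_
  filter_upwards [Measure.rnDeriv_le_one_of_le hν] with x hx
  simpa using ENNReal.toReal_mono ENNReal.one_ne_top hx

lemma integral_toReal_rnDeriv_mul_of_le [IsFiniteMeasure μ] (hν : ν ≤ μ) (f : α → ℂ) :
    ∫ x, ((ν.rnDeriv μ x).toReal : ℂ) * f x ∂μ = ∫ x, f x ∂ν := by
  have := isFiniteMeasure_of_le μ hν
  simpa only [Complex.real_smul] using
    integral_rnDeriv_smul (f := f) (Measure.absolutelyContinuous_of_le hν)

end Density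

section Translation

lemma eq_zero_of_map_add_const_eq {E : Type*} [NormedAddCommGroup E] [InnerProductSpace ℝ E]
    [MeasurableSpace E] [BorelSpace E] [SecondCountableTopology E]
    {ν : Measure E} [IsFiniteMeasure ν] {v : E} (hv : v ≠ 0) (h : ν.map (· + v) = ν) : ν = 0 := by
  have hshift (t : E) :
      charFun ν t * Complex.exp ((inner ℝ v t : ℝ) * Complex.I) = charFun ν t := by
    conv_rhs => rw [← h, charFun_map_add_const]
  have hderiv : HasDerivAt (fun s : ℝ => Complex.exp ((inner ℝ v (s • v) : ℝ) * Complex.I))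
      (inner ℝ v v * Complex.I) 0 := by
    simpa [inner_smul_right] using
      (((hasDerivAt_id (0 : ℝ)).mul_const (inner ℝ v v)).ofReal_comp.mul_const Complex.I).cexp
  have hexp : ∀ᶠ s : ℝ in 𝓝[≠] 0, Complex.exp ((inner ℝ v (s • v) : ℝ) * Complex.I) ≠ 1 :=
    hderiv.eventually_ne (by simpa using hv)
  have hchar : ∀ᶠ s : ℝ in 𝓝[≠] 0, charFun ν (s • v) = 0 :=
    hexp.mono fun s hs => by_contra fun hne => hs ((mul_eq_left₀ hne).1 (hshift _))
  have hcont : Continuous fun s : ℝ => charFun ν (s • v) := by fun_prop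
  have hzero : charFun ν ((0 : ℝ) • v) = 0 := tendsto_nhds_unique
    (hcont.continuousAt.tendsto.mono_left nhdsWithin_le_nhds)
    (tendsto_const_nhds.congr' (hchar.mono fun _ hs => hs.symm))
  simpa [measureReal_eq_zero_iff] using hzero

end Translation

section Spectrum

variable {μ ν : Measure ℝ} {Λ : Set ℝ}

lemma charFun_two_pi_mul (μ : Measure ℝ) (ξ : ℝ) :
    charFun μ (2 * π * ξ) = ∫ x : ℝ, Complex.exp (2 * π * Complex.I * ξ * x) ∂μ := by
  rw [charFun_apply_real]
  congr with x
  push_cast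
  ring_nf

lemma conj_charFun_two_pi_mul (μ : Measure ℝ) (ξ : ℝ) :
    starRingEnd ℂ (charFun μ (2 * π * ξ)) =
      ∫ x : ℝ, Complex.exp (-(2 * π * Complex.I * ξ * x)) ∂μ := by
  rw [← charFun_neg, ← mul_neg, charFun_two_pi_mul]
  simp

lemma IsOrthSet.charFun_sub_eq_zero (h : IsOrthSet μ Λ) {l l' : ℝ} (hl : l ∈ Λ) (hl' : l' ∈ Λ)
    (hne : l ≠ l') : charFun μ (2 * π * (l - l')) = 0 := by
  rw [charFun_two_pi_mul]
  exact_mod_cast h l hl l' hl' hne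

lemma norm_exp_two_pi_mul_I_mul (s x : ℝ) : ‖Complex.exp (2 * π * Complex.I * s * x)‖ = 1 := by
  rw [show 2 * π * Complex.I * s * x = (2 * π * s * x : ℝ) * Complex.I by push_cast; ring]
  exact Complex.norm_exp_ofReal_mul_I _

lemma IsSpectrum.image_sub_const (h : IsSpectrum μ Λ) (s : ℝ) : IsSpectrum μ ((· - s) '' Λ) := by
  refine ⟨?_, fun f hf hfΛ => ?_⟩
  · rintro _ ⟨l, hl, rfl⟩ _ ⟨l', hl', rfl⟩ hne
    simpa using h.1 l hl l' hl' (by rintro rfl; exact hne rfl)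
  · have hmod : MemLp (fun x : ℝ => Complex.exp (2 * π * Complex.I * s * x) * f x) 2 μ :=
      hf.of_le ((by fun_prop : Continuous _).aestronglyMeasurable.mul hf.1)
        (ae_of_all _ fun x => by rw [norm_mul, norm_exp_two_pi_mul_I_mul, one_mul])
    have hmod_zero := h.2 _ hmod fun l hl => by
      rw [← hfΛ (l - s) ⟨l, hl, rfl⟩]
      congr with x
      rw [mul_comm (Complex.exp _) (f x), mul_assoc, ← Complex.exp_add]
      push_cast
      ring_nf
    filter_upwards [hmod_zero] with x hx
    simpa using hx

lemma IsSpectrum.eq_of_charFun_eq [IsFiniteMeasure μ] (h : IsSpectrum μ Λ) {ν₁ ν₂ : Measure ℝ}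
    (h₁ : ν₁ ≤ μ) (h₂ : ν₂ ≤ μ)
    (heq : ∀ l ∈ Λ, charFun ν₁ (2 * π * l) = charFun ν₂ (2 * π * l)) : ν₁ = ν₂ := by
  have hmem₁ := memLp_toReal_rnDeriv_of_le h₁ 2
  have hmem₂ := memLp_toReal_rnDeriv_of_le h₂ 2
  have hdiff := h.2 _ (hmem₁.sub hmem₂) fun l hl => by
    have hbdd : ∀ᵐ x : ℝ ∂μ, ‖Complex.exp (-(2 * π * Complex.I * l * x))‖ ≤ 1 :=
      ae_of_all _ fun x => by
        simpa using (norm_exp_two_pi_mul_I_mul (-l) x).le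
    have hint₁ := (hmem₁.integrable one_le_two).mul_bdd (by fun_prop) hbdd
    have hint₂ := (hmem₂.integrable one_le_two).mul_bdd (by fun_prop) hbdd
    simp only [Pi.sub_apply, sub_mul]
    rw [integral_sub hint₁ hint₂, integral_toReal_rnDeriv_mul_of_le h₁,
      integral_toReal_rnDeriv_mul_of_le h₂, ← conj_charFun_two_pi_mul, ← conj_charFun_two_pi_mul,
      heq l hl, sub_self]
  have hdensity : ν₁.rnDeriv μ =ᵐ[μ] ν₂.rnDeriv μ := by
    filter_upwards [hdiff, Measure.rnDeriv_le_one_of_le h₁, Measure.rnDeriv_le_one_of_le h₂]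
      with x hx hx₁ hx₂
    refine (ENNReal.toReal_eq_toReal_iff' (ne_top_of_le_ne_top ENNReal.one_ne_top hx₁)
      (ne_top_of_le_ne_top ENNReal.one_ne_top hx₂)).1 ?_
    exact Complex.ofReal_injective (sub_eq_zero.1 hx)
  rw [← withDensity_rnDeriv_eq_of_le h₁, ← withDensity_rnDeriv_eq_of_le h₂,
    withDensity_congr_ae hdensity]

theorem not_isSpectralMeasure_of_translate_le [IsFiniteMeasure μ] {T : ℝ} (hT : T ≠ 0)
    (hzero : ∀ t, charFun μ t = 0 → Complex.exp ((T * t : ℝ) * Complex.I) = 1)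
    (hν : ν ≠ 0) (hle : ν ≤ μ) (hle' : ν.map (· + T) ≤ μ) : ¬ IsSpectralMeasure μ := by
  rintro ⟨Λ, -, hΛ⟩
  have := isFiniteMeasure_of_le μ hle
  obtain ⟨l₀, hl₀⟩ : ∃ l₀, ∀ l ∈ Λ, Complex.exp ((T * (2 * π * (l - l₀)) : ℝ) * Complex.I) = 1 := by
    rcases Λ.eq_empty_or_nonempty with rfl | ⟨l₀, hl₀⟩
    · simp
    · refine ⟨l₀, fun l hl => ?_⟩
      rcases eq_or_ne l l₀ with rfl | hne
      · simp
      · exact hzero _ (hΛ.1.charFun_sub_eq_zero hl hl₀ hne)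
  refine hν (eq_zero_of_map_add_const_eq hT ((hΛ.image_sub_const l₀).eq_of_charFun_eq hle' hle ?_))
  rintro _ ⟨l, hl, rfl⟩
  dsimp only
  rw [charFun_map_add_const, Real.inner_apply, hl₀ l hl, mul_one]

end Spectrum

section UniformLaw

/-- The law of `L * X` for `X` uniform on `(0, 1]`, that is the uniform law on `[0, L]` for `0 < L`.
Defining it by scaling includes the degenerate case `L = 0`, where it is the Dirac mass at `0`. -/
def uniformLaw (L : ℝ) : Measure ℝ := (volume.restrict (Set.Ioc 0 1)).map (L * ·)

instance (L : ℝ) : IsProbabilityMeasure (uniformLaw L) := by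
  have : IsProbabilityMeasure (volume.restrict (Set.Ioc (0 : ℝ) 1)) := ⟨by simp⟩
  exact Measure.isProbabilityMeasure_map (by fun_prop)

lemma charFun_uniformLaw (L t : ℝ) :
    charFun (uniformLaw L) t = charFun (volume.restrict (Set.Ioc 0 1)) (L * t) :=
  charFun_map_mul L t

lemma charFun_uniformLaw_mul (L t : ℝ) :
    charFun (uniformLaw L) t * ((L * t : ℝ) * Complex.I) =
      Complex.exp ((L * t : ℝ) * Complex.I) - 1 := by
  rw [charFun_uniformLaw]
  generalize L * t = x
  rcases eq_or_ne x 0 with rfl | hx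
  · simp
  have hc : (x : ℂ) * Complex.I ≠ 0 := by simpa using hx
  have hint := integral_exp_mul_complex (a := 0) (b := 1) hc
  rw [intervalIntegral.integral_of_le zero_le_one, eq_div_iff hc] at hint
  simpa [charFun_apply_real, mul_right_comm] using hint

lemma exp_eq_one_of_charFun_uniformLaw_eq_zero {L t : ℝ} (h : charFun (uniformLaw L) t = 0) :
    Complex.exp ((L * t : ℝ) * Complex.I) = 1 := by
  have hmul := charFun_uniformLaw_mul L t
  rw [h, zero_mul] at hmul
  exact sub_eq_zero.1 hmul.symm

lemma charFun_uniformLaw_of_mul_eq_zero {L t : ℝ} (h : L * t = 0) :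
    charFun (uniformLaw L) t = 1 := by
  simp [charFun_uniformLaw, h]

lemma charFun_uniformLaw_two_mul (L t : ℝ) :
    charFun (uniformLaw (2 * L)) t =
      (1 + Complex.exp ((L * t : ℝ) * Complex.I)) / 2 * charFun (uniformLaw L) t := by
  rcases eq_or_ne (L * t) 0 with h | h
  · rw [charFun_uniformLaw_of_mul_eq_zero h, charFun_uniformLaw_of_mul_eq_zero (by grind), h]
    norm_num
  have hc : ((2 * L * t : ℝ) : ℂ) * Complex.I ≠ 0 := by
    simpa [← Complex.ofReal_mul, mul_assoc] using h
  refine mul_right_cancel₀ hc ?_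
  have hsq : Complex.exp ((2 * L * t : ℝ) * Complex.I) =
      Complex.exp ((L * t : ℝ) * Complex.I) ^ 2 := by
    rw [← Complex.exp_nat_mul]
    push_cast
    ring_nf
  have hL := charFun_uniformLaw_mul L t
  rw [charFun_uniformLaw_mul, hsq]
  push_cast at hL ⊢
  linear_combination -(1 + Complex.exp (L * t * Complex.I)) * hL

lemma tendsto_charFun_uniformLaw {ι : Type*} {l : Filter ι} {L : ι → ℝ}
    (hL : Tendsto L l (𝓝 0)) (t : ℝ) :
    Tendsto (fun i => charFun (uniformLaw (L i)) t) l (𝓝 1) := by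
  have hLt : Tendsto (fun i => L i * t) l (𝓝 0) := by simpa using hL.mul_const t
  simpa [charFun_uniformLaw, Function.comp_def] using
    ((continuous_charFun (μ := volume.restrict (Set.Ioc 0 1))).tendsto 0).comp hLt

end UniformLaw

section RootsOfUnity

variable {z w : ℂ}

lemma mul_eq_one_of_one_add_add_eq_zero (hz : ‖z‖ = 1) (hw : ‖w‖ = 1) (h : 1 + z + w = 0) :
    z * w = 1 := by
  have hz₀ : z ≠ 0 := norm_ne_zero_iff.1 (by simp [hz])
  have hw₀ : w ≠ 0 := norm_ne_zero_iff.1 (by simp [hw])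
  have hconj : 1 + z⁻¹ + w⁻¹ = 0 := by
    simpa [Complex.inv_eq_conj hz, Complex.inv_eq_conj hw] using congrArg (starRingEnd ℂ) h
  field_simp at hconj
  linear_combination hconj - h

lemma cube_eq_one_of_one_add_add_eq_zero (hz : ‖z‖ = 1) (hw : ‖w‖ = 1) (h : 1 + z + w = 0) :
    z ^ 3 = 1 := by
  linear_combination (z - 1) * (z * h - mul_eq_one_of_one_add_add_eq_zero hz hw h)

end RootsOfUnity

section Moran

variable {p : ℕ → ℕ} {D : ℕ → Finset ℕ} {μ : Measure ℝ}

instance (E : Finset ℕ) (s : ℝ) : IsFiniteMeasure (unifD E s) := by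
  rcases E.eq_empty_or_nonempty with rfl | hE
  · simp only [unifD, Finset.sum_empty, smul_zero]
    infer_instance
  · exact Measure.smul_finite _ (by simp [hE.ne_empty])

lemma isProbabilityMeasure_unifD {E : Finset ℕ} (hE : E.Nonempty) (s : ℝ) :
    IsProbabilityMeasure (unifD E s) :=
  ⟨by simp [unifD, ENNReal.inv_mul_cancel, hE.ne_empty]⟩

instance (n : ℕ) : IsFiniteMeasure (muN p D n) := by
  induction n with
  | zero => unfold muN; infer_instance
  | succ n _ => unfold muN; infer_instance

lemma isProbabilityMeasure_muN (hD : ∀ n, 1 ≤ n → (D n).Nonempty) (n : ℕ) :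
    IsProbabilityMeasure (muN p D n) := by
  induction n with
  | zero => unfold muN; infer_instance
  | succ n _ =>
    have := isProbabilityMeasure_unifD (hD (n + 1) (by lia)) (Pprod p (n + 1) : ℝ)⁻¹
    unfold muN
    infer_instance

lemma charFun_unifD (E : Finset ℕ) (s t : ℝ) :
    charFun (unifD E s) t =
      (E.card : ℂ)⁻¹ * ∑ d ∈ E, Complex.exp ((s * t : ℝ) * Complex.I) ^ d := by
  have hint : ∀ d ∈ E, Integrable (fun x : ℝ => Complex.exp (t * x * Complex.I))
      (Measure.dirac (s * (d : ℝ))) := fun d _ => integrable_dirac (by simp [enorm_lt_top])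
  rw [charFun_apply_real, unifD, integral_smul_measure, integral_finsetSum_measure hint]
  simp only [integral_dirac, ← Complex.exp_nat_mul]
  simp [mul_comm, mul_assoc, mul_left_comm]

lemma charFun_unifD_triple {a b : ℕ} (ha : 0 < a) (hab : a < b) (s t : ℝ) :
    charFun (unifD {0, a, b} s) t = (1 + Complex.exp ((s * t : ℝ) * Complex.I) ^ a +
      Complex.exp ((s * t : ℝ) * Complex.I) ^ b) / 3 := by
  have h₀ : 0 ∉ ({a, b} : Finset ℕ) := by grind
  rw [charFun_unifD, Finset.card_insert_of_notMem h₀, Finset.sum_insert h₀,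
    Finset.card_pair hab.ne, Finset.sum_pair hab.ne]
  norm_num
  ring

lemma pow_eq_one_of_charFun_unifD_triple_eq_zero {a b : ℕ} (ha : 0 < a) (hab : a < b) {s t : ℝ}
    (h : charFun (unifD {0, a, b} s) t = 0) :
    Complex.exp ((s * t : ℝ) * Complex.I) ^ (a + b) = 1 ∧
      Complex.exp ((s * t : ℝ) * Complex.I) ^ (a * 3) = 1 := by
  rw [charFun_unifD_triple ha hab, div_eq_zero_iff, or_iff_left three_ne_zero] at h
  have hnorm : ∀ n : ℕ, ‖Complex.exp ((s * t : ℝ) * Complex.I) ^ n‖ = 1 := fun n => by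
    rw [norm_pow, Complex.norm_exp_ofReal_mul_I, one_pow]
  rw [pow_add, pow_mul]
  exact ⟨mul_eq_one_of_one_add_add_eq_zero (hnorm a) (hnorm b) h,
    cube_eq_one_of_one_add_add_eq_zero (hnorm a) (hnorm b) h⟩

lemma unifD_pair_conv_uniformLaw {d : ℕ} (hd : d ≠ 0) (s : ℝ) :
    unifD {0, d} s ∗ uniformLaw (d * s) = uniformLaw (2 * (d * s)) := by
  refine Measure.ext_of_charFun (funext fun t => ?_)
  rw [charFun_conv, charFun_unifD, charFun_uniformLaw_two_mul, Finset.card_pair hd.symm,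
    Finset.sum_pair hd.symm, pow_zero, ← Complex.exp_nat_mul]
  push_cast
  ring_nf

lemma smul_dirac_le_unifD {E : Finset ℕ} {d : ℕ} (hd : d ∈ E) (s : ℝ) :
    (E.card : ℝ≥0∞)⁻¹ • Measure.dirac (s * (d : ℝ)) ≤ unifD E s := by
  unfold unifD
  gcongr
  exact Finset.single_le_sum (f := fun d : ℕ => Measure.dirac (s * (d : ℝ)))
    (fun _ _ => Measure.zero_le _) hd

lemma conv_le_conv {M : Type*} [AddMonoid M] [MeasurableSpace M] [MeasurableAdd₂ M]
    {μ₁ μ₂ ν₁ ν₂ : Measure M} [SFinite ν₂] (hμ : μ₁ ≤ μ₂) (hν : ν₁ ≤ ν₂) :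
    μ₁ ∗ ν₁ ≤ μ₂ ∗ ν₂ :=
  Measure.map_mono (Measure.prod_mono hμ hν) (by fun_prop)

lemma smul_dirac_le_muN {x : ℕ → ℕ} (n : ℕ) (hx : ∀ i < n, x (i + 1) ∈ D (i + 1)) :
    (∏ i ∈ range n, ((D (i + 1)).card : ℝ≥0∞)⁻¹) •
      Measure.dirac (∑ i ∈ range n, (Pprod p (i + 1) : ℝ)⁻¹ * (x (i + 1) : ℝ)) ≤ muN p D n := by
  induction n with
  | zero => simp [muN]
  | succ n ih =>
    refine le_trans (le_of_eq ?_) (conv_le_conv (ih fun i hi => hx i (by lia))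
      (smul_dirac_le_unifD (hx n n.lt_succ_self) _))
    rw [Measure.conv_smul_left, Measure.conv_smul_right, Measure.dirac_conv_dirac, smul_smul,
      prod_range_succ, sum_range_succ]

lemma smul_map_add_const_le_muN_conv {x : ℕ → ℕ} (n : ℕ) (hx : ∀ i < n, x (i + 1) ∈ D (i + 1))
    (ρ : Measure ℝ) [SFinite ρ] :
    (∏ i ∈ range n, ((D (i + 1)).card : ℝ≥0∞)⁻¹) •
      ρ.map (· + ∑ i ∈ range n, (Pprod p (i + 1) : ℝ)⁻¹ * (x (i + 1) : ℝ)) ≤ muN p D n ∗ ρ := by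
  simp only [add_comm _ (∑ _ ∈ range n, _)]
  rw [← Measure.dirac_conv, ← Measure.conv_smul_left]
  exact conv_le_conv (smul_dirac_le_muN n hx) le_rfl

lemma charFun_muN (n : ℕ) (t : ℝ) :
    charFun (muN p D n) t =
      ∏ i ∈ range n, charFun (unifD (D (i + 1)) (Pprod p (i + 1) : ℝ)⁻¹) t := by
  induction n with
  | zero => simp [muN]
  | succ n ih => rw [muN, charFun_conv, ih, prod_range_succ]

lemma Pprod_succ (p : ℕ → ℕ) (n : ℕ) : Pprod p (n + 1) = Pprod p n * p (n + 1) :=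
  prod_Icc_succ_top (by lia) p

lemma IsWeakLimit.tendsto_charFun {ν : ℕ → Measure ℝ} [∀ n, IsProbabilityMeasure (ν n)]
    [IsProbabilityMeasure μ] (h : IsWeakLimit ν μ) (t : ℝ) :
    Tendsto (fun n => charFun (ν n) t) atTop (𝓝 (charFun μ t)) :=
  ProbabilityMeasure.tendsto_iff_tendsto_charFun (μ := fun n => ⟨ν n, inferInstance⟩)
    (μ₀ := ⟨μ, inferInstance⟩) |>.1
    (ProbabilityMeasure.tendsto_iff_forall_integral_tendsto.2 h) t

section BinaryTail

variable {m d : ℕ}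

lemma Pprod_add_of_eq_two (hp : ∀ n, m < n → p n = 2) (n : ℕ) :
    Pprod p (m + n) = Pprod p m * 2 ^ n := by
  induction n with
  | zero => simp
  | succ n ih => rw [← add_assoc, Pprod_succ, ih, hp _ (by lia), pow_succ, mul_assoc]

lemma muN_conv_uniformLaw (hd : d ≠ 0) (hp : ∀ n, m < n → p n = 2)
    (hD : ∀ n, m < n → D n = {0, d}) (n : ℕ) :
    muN p D (m + n) ∗ uniformLaw (d / Pprod p (m + n)) =
      muN p D m ∗ uniformLaw (d / Pprod p m) := by
  induction n with
  | zero => rfl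
  | succ n ih =>
    have hscale : (d / Pprod p (m + n) : ℝ) = 2 * (d * (Pprod p (m + n + 1) : ℝ)⁻¹) := by
      rw [Pprod_succ, hp _ (by lia)]
      push_cast
      field
    rw [← ih, hscale, ← unifD_pair_conv_uniformLaw hd, ← Measure.conv_assoc,
      ← hD (m + n + 1) (by lia)]
    rfl

lemma IsMoran.eq_muN_conv_uniformLaw (hμ : IsMoran p D μ) (hd : d ≠ 0)
    (hp : ∀ n, m < n → p n = 2) (hD : ∀ n, m < n → D n = {0, d})
    (hne : ∀ n, 1 ≤ n → (D n).Nonempty) :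
    μ = muN p D m ∗ uniformLaw (d / Pprod p m) := by
  have := hμ.1
  have := isProbabilityMeasure_muN (p := p) hne
  refine Measure.ext_of_charFun (funext fun t => ?_)
  have hmuN : Tendsto (fun n => charFun (muN p D (m + n)) t) atTop (𝓝 (charFun μ t)) := by
    simpa only [add_comm m, Function.comp_def] using
      (hμ.2.tendsto_charFun t).comp (tendsto_add_atTop_nat m)
  have hscale : Tendsto (fun n => (d / Pprod p (m + n) : ℝ)) atTop (𝓝 0) := by
    simpa [Pprod_add_of_eq_two hp, div_eq_mul_inv, mul_assoc, mul_comm] using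
      (tendsto_inv_atTop_zero.comp (tendsto_pow_atTop_atTop_of_one_lt
        (one_lt_two : (1 : ℝ) < 2))).const_mul (d * (Pprod p m : ℝ)⁻¹)
  have hlim := hmuN.mul (tendsto_charFun_uniformLaw hscale t)
  simp only [← charFun_conv, muN_conv_uniformLaw hd hp hD, mul_one] at hlim
  exact tendsto_nhds_unique hlim tendsto_const_nhds

end BinaryTail

end Moran

section Example

variable {p : ℕ → ℕ} {D : ℕ → Finset ℕ}

lemma exp_ofReal_mul_I_eq_one_of_pow {x y : ℝ} (n : ℕ) (hxy : y = n * x)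
    (h : Complex.exp (x * Complex.I) ^ n = 1) : Complex.exp (y * Complex.I) = 1 := by
  rw [← h, ← Complex.exp_nat_mul, hxy]
  push_cast
  ring_nf

lemma exp_eq_one_of_charFun_muN_two_conv_uniformLaw_eq_zero (hP1 : Pprod p 1 = 2)
    (hP2 : Pprod p 2 = 4) (hD1 : D 1 = {0, 1, 2}) (hD2 : D 2 = {0, 5, 6}) {t : ℝ}
    (h : charFun (muN p D 2 ∗ uniformLaw (3 / 4)) t = 0) :
    Complex.exp ((3 / 2 * t : ℝ) * Complex.I) = 1 := by
  simp only [charFun_conv, charFun_muN, prod_range_succ, prod_range_zero, one_mul, zero_add,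
    one_add_one_eq_two, hP1, hP2, hD1, hD2, Nat.cast_ofNat, mul_eq_zero] at h
  rcases h with (hfirst | hsecond) | htail
  · have hcube := (pow_eq_one_of_charFun_unifD_triple_eq_zero (by norm_num) (by norm_num) hfirst).1
    exact exp_ofReal_mul_I_eq_one_of_pow (x := 2⁻¹ * t) 3 (by push_cast; ring) hcube
  · have hgcd := pow_gcd_eq_one.2
      (pow_eq_one_of_charFun_unifD_triple_eq_zero (by norm_num) (by norm_num) hsecond)
    rw [show Nat.gcd (5 + 6) (5 * 3) = 1 from rfl, pow_one] at hgcd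
    exact exp_ofReal_mul_I_eq_one_of_pow (x := 4⁻¹ * t) 6 (by push_cast; ring)
      (by rw [hgcd, one_pow])
  · have hone := exp_eq_one_of_charFun_uniformLaw_eq_zero htail
    exact exp_ofReal_mul_I_eq_one_of_pow (x := 3 / 4 * t) 2 (by push_cast; ring)
      (by rw [hone, one_pow])

lemma smul_map_add_const_le_muN_two_conv (hP1 : Pprod p 1 = 2)
    (hP2 : Pprod p 2 = 4) (hD1 : D 1 = {0, 1, 2}) (hD2 : D 2 = {0, 5, 6}) (ρ : Measure ℝ)
    [SFinite ρ] {a b : ℕ} (ha : a ∈ D 1) (hb : b ∈ D 2) :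
    (9⁻¹ : ℝ≥0∞) • ρ.map (· + (a / 2 + b / 4 : ℝ)) ≤ muN p D 2 ∗ ρ := by
  have h := smul_map_add_const_le_muN_conv (p := p) (D := D)
    (x := fun i => if i = 1 then a else b) 2 (fun i hi => by interval_cases i <;> simpa) ρ
  have hcard : (3⁻¹ * 3⁻¹ : ℝ≥0∞) = 9⁻¹ := by
    rw [← ENNReal.mul_inv (by simp) (by simp)]
    norm_num
  simpa [prod_range_succ, sum_range_succ, hP1, hP2, hD1, hD2, hcard, div_eq_inv_mul] using h

end Example

/-- Example 5.3. With `p_n = 2`, `D_1 = {0,1,2}`, `D_2 = {0,5,6}`,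
`D_n = {0,3}` for `n ≥ 3`, the Moran measure is not spectral. -/
theorem example_not_spectral (p : ℕ → ℕ) (D : ℕ → Finset ℕ) (μ : Measure ℝ)
    (hp : ∀ n, 1 ≤ n → p n = 2)
    (hD1 : D 1 = ({0, 1, 2} : Finset ℕ)) (hD2 : D 2 = ({0, 5, 6} : Finset ℕ))
    (hD : ∀ n, 3 ≤ n → D n = ({0, 3} : Finset ℕ))
    (hμ : IsMoran p D μ) : ¬ IsSpectralMeasure μ := by
  have hP1 : Pprod p 1 = 2 := by simp [Pprod, hp]
  have hP2 : Pprod p 2 = 4 := by rw [Pprod_succ, hP1, hp 2 one_le_two]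
  have hne : ∀ n, 1 ≤ n → (D n).Nonempty := fun n hn => by
    obtain rfl | rfl | hn : n = 1 ∨ n = 2 ∨ 3 ≤ n := by lia
    all_goals simp [*]
  obtain rfl : μ = muN p D 2 ∗ uniformLaw (3 / 4) := by
    simpa [hP2] using hμ.eq_muN_conv_uniformLaw (m := 2) three_ne_zero
      (fun n hn => hp n (by lia)) hD hne
  have hatom := fun a b => smul_map_add_const_le_muN_two_conv (a := a) (b := b) hP1 hP2 hD1 hD2
    (uniformLaw (3 / 4))
  refine not_isSpectralMeasure_of_translate_le (T := 3 / 2) (ν := (9⁻¹ : ℝ≥0∞) • uniformLaw (3 / 4))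
    (by norm_num)
    (fun t => exp_eq_one_of_charFun_muN_two_conv_uniformLaw_eq_zero hP1 hP2 hD1 hD2) ?_ ?_ ?_
  · simp [IsProbabilityMeasure.ne_zero]
  · simpa using hatom 0 0 (by simp [hD1]) (by simp [hD2])
  · rw [Measure.map_smul]
    convert hatom 0 6 (by simp [hD1]) (by simp [hD2]) using 4
    norm_num

end
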